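/- An ordered matrix F is a configuration matrix if and only if its transpose F^T is a configuration matrix. -/

import Mathlib

open scoped Classical

namespace SU

/-- min of a finset of naturals (0 for the empty set). -/
def fmin (s : Finset ℕ) : ℕ := s.min.untopD 0
/-- max of a finset of naturals (0 for the empty set). -/
def fmax (s : Finset ℕ) : ℕ := s.max.unbotD 0

/-- `L` is an ordered partition of the finite set `S`. -/
def IsOrderedPartition (S : Finset ℕ) (L : List (Finset ℕ)) : Prop :=
  (∀ B ∈ L, B ≠ ∅) ∧ List.Pairwise Disjoint L ∧ L.foldr (· ∪ ·) ∅ = S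

def StepIncreasing (L : List (Finset ℕ)) : Prop :=
  ∀ j, j + 1 < L.length → fmin (L.getD j ∅) < fmax (L.getD (j+1) ∅)

def StepDecreasing (L : List (Finset ℕ)) : Prop :=
  ∀ j, j + 1 < L.length → fmin (L.getD (j+1) ∅) < fmax (L.getD j ∅)

/-- maximal strictly decreasing consecutive subwords, in order of occurrence. -/
def decRuns : List ℕ → List (List ℕ)
  | [] => []
  | a :: l =>
    match decRuns l with
    | [] => [[a]]
    | r :: rs => if r.headD 0 < a then (a :: r) :: rs else [a] :: r :: rs

/-- maximal strictly increasing consecutive subwords, in order of occurrence. -/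
def incRuns : List ℕ → List (List ℕ)
  | [] => []
  | a :: l =>
    match incRuns l with
    | [] => [[a]]
    | r :: rs => if a < r.headD 0 then (a :: r) :: rs else [a] :: r :: rs

/-- The word `σ(1) σ(2) ⋯ σ(n)` of a permutation, with values in `{1,…,n}`. -/
def permWord (n : ℕ) (σ : Equiv.Perm (Fin n)) : List ℕ :=
  List.ofFn (fun k => ((σ k : ℕ) + 1))

def decBlocks (w : List ℕ) : List (Finset ℕ) := (decRuns w).map List.toFinset
def incBlocks (w : List ℕ) : List (Finset ℕ) := (incRuns w).map List.toFinset

end SU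


open scoped Classical

namespace SU

def inversions (w : List ℕ) : ℕ :=
  ((Finset.range w.length ×ˢ Finset.range w.length).filter
    (fun ab => ab.1 < ab.2 ∧ w.getD ab.2 0 < w.getD ab.1 0)).card

/-- Sign of the permutation taking the increasing word to the concatenation of the
blocks of `L`, each listed in increasing order. -/
def psgn (L : List (Finset ℕ)) : ℤ :=
  (-1) ^ inversions ((L.map (fun s => s.sort (· ≤ ·))).flatten)

def shuffSgn (M N : Finset ℕ) : ℤ := psgn [M, N]

/-- degree of an ordered partition: `Σ (#block − 1)`. -/
def degp (L : List (Finset ℕ)) : ℕ := (L.map (fun s => s.card - 1)).sum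

def eps1 (L : List (Finset ℕ)) : ℕ :=
  ∑ k ∈ Finset.range L.length, (L.length - 1 - k) * (L.getD k ∅).card

def sgn1 (L : List (Finset ℕ)) : ℤ := (-1) ^ eps1 L * psgn L
def sgn2 (L : List (Finset ℕ)) : ℤ :=
  (-1) ^ (eps1 L + Nat.choose (L.length - 1) 2) * psgn L
def rsgn (L : List (Finset ℕ)) : ℤ :=
  (-1) ^ (∑ k ∈ Finset.range L.length, (L.getD k ∅).card * ((L.getD k ∅).card - 1) / 2)

/-- Entry of a matrix, with `0` outside the index range; `i` counts rows from the top,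
`j` counts columns from the left, both 0-based. -/
def entry {q p : ℕ} (M : Matrix (Fin q) (Fin p) ℕ) (i j : ℕ) : ℕ :=
  if h : i < q ∧ j < p then M ⟨i, h.1⟩ ⟨j, h.2⟩ else 0

def colBlock {q p : ℕ} (M : Matrix (Fin q) (Fin p) ℕ) (j : ℕ) : Finset ℕ :=
  ((Finset.range q).image (fun i => entry M i j)).erase 0

def rowBlock {q p : ℕ} (M : Matrix (Fin q) (Fin p) ℕ) (i : ℕ) : Finset ℕ :=
  ((Finset.range p).image (fun j => entry M i j)).erase 0

/-- column face `c(O) = U_1|⋯|U_p`. -/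
def colFace {q p : ℕ} (M : Matrix (Fin q) (Fin p) ℕ) : List (Finset ℕ) :=
  (List.range p).map (colBlock M)

/-- row face `r(O) = V_q|⋯|V_1` (rows listed from bottom to top). -/
def rowFace {q p : ℕ} (M : Matrix (Fin q) (Fin p) ℕ) : List (Finset ℕ) :=
  ((List.range q).map (rowBlock M)).reverse

/-- set of nonzero entries of a matrix. -/
def entrySet {q p : ℕ} (M : Matrix (Fin q) (Fin p) ℕ) : Finset ℕ :=
  (((Finset.range q) ×ˢ (Finset.range p)).image (fun ij => entry M ij.1 ij.2)).erase 0

def IsOrderedMatrix {q p : ℕ} (M : Matrix (Fin q) (Fin p) ℕ) : Prop :=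
  0 < q ∧ 0 < p ∧
  entrySet M = Finset.Icc 1 (p + q - 1) ∧
  (∀ i < q, ∃ j < p, entry M i j ≠ 0) ∧
  (∀ j < p, ∃ i < q, entry M i j ≠ 0) ∧
  (∀ i₁ j₁ i₂ j₂, entry M i₁ j₁ ≠ 0 → entry M i₂ j₂ ≠ 0 →
      entry M i₁ j₁ = entry M i₂ j₂ → i₁ = i₂ ∧ j₁ = j₂) ∧
  (∀ i j₁ j₂, j₁ < j₂ → entry M i j₁ ≠ 0 → entry M i j₂ ≠ 0 → entry M i j₁ < entry M i j₂) ∧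
  (∀ j i₁ i₂, i₁ < i₂ → entry M i₁ j ≠ 0 → entry M i₂ j ≠ 0 → entry M i₁ j < entry M i₂ j)

def IsStepMatrix {q p : ℕ} (M : Matrix (Fin q) (Fin p) ℕ) : Prop :=
  IsOrderedMatrix M ∧
  (∀ i j₁ j₂ j₃, j₁ ≤ j₂ → j₂ ≤ j₃ → entry M i j₁ ≠ 0 → entry M i j₃ ≠ 0 → entry M i j₂ ≠ 0) ∧
  (∀ j i₁ i₂ i₃, i₁ ≤ i₂ → i₂ ≤ i₃ → entry M i₁ j ≠ 0 → entry M i₃ j ≠ 0 → entry M i₂ j ≠ 0) ∧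
  (∃! i, entry M i i ≠ 0) ∧
  (∀ i₁ i₂, entry M (i₁+1) i₁ ≠ 0 → entry M (i₂+1) i₂ ≠ 0 → i₁ = i₂) ∧
  (∀ i₁ i₂, entry M i₁ (i₁+1) ≠ 0 → entry M i₂ (i₂+1) ≠ 0 → i₁ = i₂)

def DCond {q p : ℕ} (M : Matrix (Fin q) (Fin p) ℕ) (i j : ℕ) : Prop :=
  i + 1 < q ∧ j < p ∧ entry M (i+1) j = 0 ∧ entry M i j ≠ 0 ∧
  (∃ k < p, k ≠ j ∧ entry M i k ≠ 0) ∧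
  (∀ ℓ < j, entry M (i+1) ℓ < entry M i j) ∧
  (∀ ℓ, j < ℓ → ℓ < p → entry M (i+1) ℓ ≠ 0 → entry M i j < entry M (i+1) ℓ)

/-- the down-shift operator `D_{i,j}` (0-based indices). -/
noncomputable def Dop {q p : ℕ} (M : Matrix (Fin q) (Fin p) ℕ) (i j : ℕ) :
    Matrix (Fin q) (Fin p) ℕ :=
  if DCond M i j then
    Matrix.of fun a b =>
      if (a : ℕ) = i ∧ (b : ℕ) = j then 0
      else if (a : ℕ) = i + 1 ∧ (b : ℕ) = j then entry M i j
      else M a b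
  else M

def RCond {q p : ℕ} (M : Matrix (Fin q) (Fin p) ℕ) (i j : ℕ) : Prop :=
  j + 1 < p ∧ i < q ∧ entry M i (j+1) = 0 ∧ entry M i j ≠ 0 ∧
  (∃ k < q, k ≠ i ∧ entry M k j ≠ 0) ∧
  (∀ ℓ < i, entry M ℓ (j+1) < entry M i j) ∧
  (∀ ℓ, i < ℓ → ℓ < q → entry M ℓ (j+1) ≠ 0 → entry M i j < entry M ℓ (j+1))

/-- the right-shift operator `R_{i,j}` (0-based indices). -/
noncomputable def Rop {q p : ℕ} (M : Matrix (Fin q) (Fin p) ℕ) (i j : ℕ) :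
    Matrix (Fin q) (Fin p) ℕ :=
  if RCond M i j then
    Matrix.of fun a b =>
      if (a : ℕ) = i ∧ (b : ℕ) = j then 0
      else if (a : ℕ) = i ∧ (b : ℕ) = j + 1 then entry M i j
      else M a b
  else M

inductive Shift
  | D (i j : ℕ)
  | R (i j : ℕ)

noncomputable def applyShift {q p : ℕ} (g : Shift) (M : Matrix (Fin q) (Fin p) ℕ) :
    Matrix (Fin q) (Fin p) ℕ :=
  match g with
  | .D i j => Dop M i j
  | .R i j => Rop M i j

/-- `F` is obtained from `E` by a sequence of shift operators in which the down-shifts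
occur with nondecreasing row indices and the right-shifts with nondecreasing column
indices (the list records the operators in order of application). -/
def DerivedFrom {q p : ℕ} (E F : Matrix (Fin q) (Fin p) ℕ) : Prop :=
  ∃ L : List Shift,
    (∀ i₁ j₁ i₂ j₂, List.Sublist [Shift.D i₁ j₁, Shift.D i₂ j₂] L → i₁ ≤ i₂) ∧
    (∀ i₁ j₁ i₂ j₂, List.Sublist [Shift.R i₁ j₁, Shift.R i₂ j₂] L → j₁ ≤ j₂) ∧
    F = L.foldl (fun M g => applyShift g M) E

def IsConfigMatrix {q p : ℕ} (F : Matrix (Fin q) (Fin p) ℕ) : Prop :=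
  IsOrderedMatrix F ∧ ∃ E, IsStepMatrix E ∧ DerivedFrom E F

/-- configuration sign of `F` derived from the step matrix `E`. -/
def csgnFrom {q p : ℕ} (E F : Matrix (Fin q) (Fin p) ℕ) : ℤ :=
  (-1) ^ Nat.choose q 2 * rsgn (colFace E) * sgn1 (rowFace F) * sgn2 (colFace E) *
    sgn2 (colFace F)

noncomputable def csgn {q p : ℕ} (F : Matrix (Fin q) (Fin p) ℕ) : ℤ :=
  if h : ∃ E, IsStepMatrix E ∧ DerivedFrom E F then csgnFrom h.choose F else 1

end SU
section CoreC
open scoped Classical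

namespace SU

/-- the row (0-based) of column `j` containing the value `v`. -/
noncomputable def rowOf {q p : ℕ} (M : Matrix (Fin q) (Fin p) ℕ) (j v : ℕ) : ℕ :=
  if h : ∃ i, i < q ∧ entry M i j = v then h.choose else q

/-- the column (0-based) of row `i` containing the value `v`. -/
noncomputable def colOf {q p : ℕ} (M : Matrix (Fin q) (Fin p) ℕ) (i v : ℕ) : ℕ :=
  if h : ∃ j, j < p ∧ entry M i j = v then h.choose else p

/-- `R_{M_j}`: right-shifts moving each entry of `S` from column `j` to column `j+1`
(0-based), applied in increasing order of the entries. -/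
noncomputable def applyRset {q p : ℕ} (M : Matrix (Fin q) (Fin p) ℕ) (j : ℕ) (S : Finset ℕ) :
    Matrix (Fin q) (Fin p) ℕ :=
  (S.sort (· ≤ ·)).foldl (fun acc v => Rop acc (rowOf acc j v) j) M

/-- `D_{N_i}`: down-shifts moving each entry of `S` from row `i` to row `i+1`
(0-based), applied in increasing order of the entries. -/
noncomputable def applyDset {q p : ℕ} (M : Matrix (Fin q) (Fin p) ℕ) (i : ℕ) (S : Finset ℕ) :
    Matrix (Fin q) (Fin p) ℕ :=
  (S.sort (· ≤ ·)).foldl (fun acc v => Dop acc i (colOf acc i v)) M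

/-- `D_{N_{q−1}} ⋯ D_{N_1} R_{M_{p−1}} ⋯ R_{M_1} E`, where `Mf j` is the set `M_j`
(`1 ≤ j ≤ p−1`) and `Nf i` is the set `N_i` (`1 ≤ i ≤ q−1`). -/
noncomputable def structComposite {q p : ℕ} (E : Matrix (Fin q) (Fin p) ℕ)
    (Mf Nf : ℕ → Finset ℕ) : Matrix (Fin q) (Fin p) ℕ :=
  (List.range (q-1)).foldl (fun acc i => applyDset acc i (Nf (i+1)))
    ((List.range (p-1)).foldl (fun acc j => applyRset acc j (Mf (j+1))) E)

variable (K : Type) [CommRing K]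

/-- boundary of a basis element of `C_*(P)`. -/
noncomputable def bnd (u : List (Finset ℕ)) : (List (Finset ℕ)) →₀ K :=
  ∑ k ∈ Finset.range u.length,
    ∑ M ∈ (u.getD k ∅).powerset,
      if M ≠ ∅ ∧ M ≠ u.getD k ∅ then
        ((((-1 : ℤ) ^ (degp (u.take k) + M.card)) * shuffSgn M (u.getD k ∅ \ M) : ℤ) : K) •
          Finsupp.single (u.take k ++ M :: (u.getD k ∅ \ M) :: u.drop (k+1)) (1 : K)
      else 0

/-- `Δ_P` on the top cell `{1,…,m}`: the sum of `csgn F · c(F) ⊗ r(F)` over all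
configuration matrices `F` with nonzero entry set `{1,…,m}` (with `Δ_P({1}) = {1}⊗{1}`). -/
noncomputable def deltaTop (m : ℕ) : (List (Finset ℕ) × List (Finset ℕ)) →₀ K :=
  if m = 1 then Finsupp.single ([{1}], [{1}]) 1
  else
    ∑ qq ∈ Finset.Icc 1 m, ∑ pp ∈ Finset.Icc 1 m,
      ∑ G : Fin qq → Fin pp → Fin (m+1),
        if IsConfigMatrix (Matrix.of fun i j => ((G i j : ℕ))) ∧
            entrySet (Matrix.of fun i j => ((G i j : ℕ))) = Finset.Icc 1 m then
          ((csgn (Matrix.of fun i j => ((G i j : ℕ))) : ℤ) : K) •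
            Finsupp.single (colFace (Matrix.of fun i j => ((G i j : ℕ))),
                            rowFace (Matrix.of fun i j => ((G i j : ℕ)))) 1
        else 0

/-- relabel a subset of `{1,…,#U}` along the order isomorphism `{1,…,#U} ≅ U`. -/
def relabel (U : Finset ℕ) (s : Finset ℕ) : Finset ℕ :=
  s.image (fun i => (U.sort (· ≤ ·)).getD (i - 1) 0)

/-- `Δ_P` on a basis element, via the standard comultiplicative extension with
Koszul signs. -/
noncomputable def deltaFun : List (Finset ℕ) → ((List (Finset ℕ) × List (Finset ℕ)) →₀ K)
  | [] => Finsupp.single ([], []) 1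
  | U :: L =>
      (deltaTop K U.card).sum fun ab c₁ =>
        (deltaFun L).sum fun ab' c₂ =>
          (c₁ * c₂ * (((-1 : ℤ) ^ (degp ab.2 * degp ab'.1) : ℤ) : K)) •
            Finsupp.single (ab.1.map (relabel U) ++ ab'.1, ab.2.map (relabel U) ++ ab'.2) 1

/-- linear extension of `Δ_P`. -/
noncomputable def deltaChain (f : (List (Finset ℕ)) →₀ K) :
    (List (Finset ℕ) × List (Finset ℕ)) →₀ K :=
  f.sum fun u c => c • deltaFun K u

/-- `∂⊗1 + 1⊗∂` on the (concrete model of the) tensor square. -/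
noncomputable def bndTensor (t : (List (Finset ℕ) × List (Finset ℕ)) →₀ K) :
    (List (Finset ℕ) × List (Finset ℕ)) →₀ K :=
  t.sum fun ab c =>
    c • ((bnd K ab.1).sum (fun a' c' => c' • Finsupp.single (a', ab.2) (1 : K)) +
         (((-1 : ℤ) ^ degp ab.1 : ℤ) : K) •
           (bnd K ab.2).sum (fun b' c' => c' • Finsupp.single (ab.1, b') (1 : K)))

end SU
end CoreC
namespace SU

/-! Transposing a matrix exchanges rows and columns in every clause of the definitions: ordered and
step matrices are preserved, and `D_{i,j}` acts on `M` as `R_{j,i}` acts on `Mᵀ`. Hence a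
derivation of `F` from `E` becomes, operator by operator, a derivation of `Fᵀ` from `Eᵀ`, in which
the ordering conditions on down-shifts and on right-shifts have traded places. -/

theorem sublist_map_iff_of_involutive {α : Type*} {f : α → α} (hf : Function.Involutive f)
    {l L : List α} : l.Sublist (L.map f) ↔ (l.map f).Sublist L := by
  have hmap : Function.Involutive (List.map f) := List.map_involutive_iff.mpr hf
  exact ⟨fun h => hmap L ▸ h.map f, fun h => hmap l ▸ h.map f⟩

section Transpose

open scoped Matrix

variable {q p : ℕ} {M E F : Matrix (Fin q) (Fin p) ℕ}

theorem entry_transpose (M : Matrix (Fin q) (Fin p) ℕ) (i j : ℕ) :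
    entry Mᵀ i j = entry M j i := by
  simp only [entry, Matrix.transpose_apply, and_comm]

theorem entrySet_transpose (M : Matrix (Fin q) (Fin p) ℕ) : entrySet Mᵀ = entrySet M := by
  simp only [entrySet, entry_transpose]
  rw [← Finset.image_swap_product, Finset.image_image]
  rfl

theorem IsOrderedMatrix.transpose (h : IsOrderedMatrix M) : IsOrderedMatrix Mᵀ := by
  obtain ⟨hq, hp, hset, hrow, hcol, hinj, hrowMono, hcolMono⟩ := h
  simp only [IsOrderedMatrix, entry_transpose, entrySet_transpose]
  exact ⟨hp, hq, hset.trans (by rw [add_comm]), hcol, hrow,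
    fun _ _ _ _ h₁ h₂ heq => (hinj _ _ _ _ h₁ h₂ heq).symm, hcolMono, hrowMono⟩

theorem IsStepMatrix.transpose (h : IsStepMatrix M) : IsStepMatrix Mᵀ := by
  obtain ⟨hord, hrow, hcol, hdiag, hsub, hsuper⟩ := h
  simp only [IsStepMatrix, entry_transpose]
  exact ⟨hord.transpose, hcol, hrow, hdiag, hsuper, hsub⟩

theorem dCond_transpose (M : Matrix (Fin q) (Fin p) ℕ) (i j : ℕ) :
    DCond Mᵀ i j ↔ RCond M j i := by
  simp only [DCond, RCond, entry_transpose]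

theorem dop_transpose (M : Matrix (Fin q) (Fin p) ℕ) (i j : ℕ) :
    Dop Mᵀ i j = (Rop M j i)ᵀ := by
  simp only [Dop, Rop, dCond_transpose, entry_transpose]
  split_ifs with h
  · ext a b
    simp only [Matrix.of_apply, Matrix.transpose_apply, and_comm]
  · rfl

theorem rop_transpose (M : Matrix (Fin q) (Fin p) ℕ) (i j : ℕ) :
    Rop Mᵀ i j = (Dop M j i)ᵀ := by
  rw [← Matrix.transpose_transpose (Rop Mᵀ i j), ← dop_transpose, Matrix.transpose_transpose]

/-- The conjugate of a shift operator by transposition, which exchanges `D_{i,j}` and `R_{j,i}`. -/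
def Shift.transpose : Shift → Shift
  | .D i j => .R j i
  | .R i j => .D j i

theorem Shift.transpose_involutive : Function.Involutive Shift.transpose
  | .D _ _ => rfl
  | .R _ _ => rfl

theorem applyShift_transpose (g : Shift) (M : Matrix (Fin q) (Fin p) ℕ) :
    applyShift g.transpose Mᵀ = (applyShift g M)ᵀ :=
  match g with
  | .D i j => rop_transpose M j i
  | .R i j => dop_transpose M j i

theorem foldl_applyShift_transpose (L : List Shift) (M : Matrix (Fin q) (Fin p) ℕ) :
    (L.map Shift.transpose).foldl (fun A g => applyShift g A) Mᵀ =
      (L.foldl (fun A g => applyShift g A) M)ᵀ := by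
  rw [List.foldl_map]
  exact List.foldl_hom Matrix.transpose fun A g => applyShift_transpose g A

theorem DerivedFrom.transpose (h : DerivedFrom E F) : DerivedFrom Eᵀ Fᵀ := by
  obtain ⟨L, hdown, hright, rfl⟩ := h
  have sublist_iff {l : List Shift} :=
    sublist_map_iff_of_involutive Shift.transpose_involutive (l := l) (L := L)
  exact ⟨L.map Shift.transpose,
    fun _ _ _ _ h => hright _ _ _ _ (sublist_iff.mp h),
    fun _ _ _ _ h => hdown _ _ _ _ (sublist_iff.mp h),
    (foldl_applyShift_transpose L E).symm⟩

theorem IsConfigMatrix.transpose (h : IsConfigMatrix F) : IsConfigMatrix Fᵀ :=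
  let ⟨hord, E, hstep, hder⟩ := h
  ⟨hord.transpose, Eᵀ, hstep.transpose, hder.transpose⟩

end Transpose

/-- An ordered matrix `F` is a configuration matrix if and only if
its transpose is a configuration matrix. -/
theorem statement11 {q p : ℕ} (F : Matrix (Fin q) (Fin p) ℕ) :
    IsConfigMatrix F ↔ IsConfigMatrix F.transpose :=
  ⟨fun h => h.transpose, fun h => F.transpose_transpose ▸ h.transpose⟩

end SU
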